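/- Let N ≥ 2, let B ⊂ ℝ^N be a bounded radial domain and set I = closure{|x| : x ∈ B}. Let f : I × ℝ → ℝ, (r,u) ↦ f(r,u), be continuous in r and locally Lipschitz in u uniformly with respect to r. Let u ∈ C(B̄) ∩ C²(B) be a classical solution of the elliptic problem −Δu = f(|x|,u) in B, u = 0 on ∂B, such that there is e ∈ S with u(x) ≥ u(σ_e(x)) for all x ∈ B(e) and u ∘ σ_e ≢ u on B(e). Then u is foliated Schwarz symmetric with respect to some p ∈ S. -/

import Mathlib

open Set Metric Filter
open scoped RealInnerProductSpace

noncomputable section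

variable {N : ℕ}

/-- Reflection through the hyperplane `H(e) = {x : ⟪x,e⟫ = 0}`:
`σ_e(x) = x - 2 (x·e) e`. -/
def reflHyp (e x : EuclideanSpace ℝ (Fin N)) : EuclideanSpace ℝ (Fin N) :=
  x - (2 * ⟪x, e⟫) • e

/-- The half domain `B(e) = {x ∈ B : x·e > 0}`. -/
def halfDom (B : Set (EuclideanSpace ℝ (Fin N))) (e : EuclideanSpace ℝ (Fin N)) :
    Set (EuclideanSpace ℝ (Fin N)) := {x ∈ B | 0 < ⟪x, e⟫}

/-- A (bounded) radial domain: an open ball or an open annulus centered at the origin. -/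
def IsRadialDomain (B : Set (EuclideanSpace ℝ (Fin N))) : Prop :=
  (∃ R, 0 < R ∧ B = Metric.ball 0 R) ∨
  (∃ r R, 0 < r ∧ r < R ∧ B = {x : EuclideanSpace ℝ (Fin N) | r < ‖x‖ ∧ ‖x‖ < R})

/-- `u` is foliated Schwarz symmetric on `D` with respect to the unit vector `p`:
`u(x) ≥ u(y)` whenever `|x| = |y|` and `x·p ≥ y·p`.  (This is equivalent to axial
symmetry with respect to `ℝp` together with monotonicity in the polar angle.) -/
def FoliatedSchwarzOn (D : Set (EuclideanSpace ℝ (Fin N)))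
    (u : EuclideanSpace ℝ (Fin N) → ℝ) (p : EuclideanSpace ℝ (Fin N)) : Prop :=
  ∀ x ∈ D, ∀ y ∈ D, ‖x‖ = ‖y‖ → ⟪y, p⟫ ≤ ⟪x, p⟫ → u y ≤ u x

/-- The omega limit set of a (bounded) solution `u = u(x,t)`: all continuous
functions `z` on `B̄` which are uniform limits on `B̄` of `u(·, tₙ)` for some
sequence `tₙ → ∞`. -/
def omegaLimitSet (B : Set (EuclideanSpace ℝ (Fin N)))
    (u : EuclideanSpace ℝ (Fin N) → ℝ → ℝ) : Set (EuclideanSpace ℝ (Fin N) → ℝ) :=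
  {z | ContinuousOn z (closure B) ∧ ∃ t : ℕ → ℝ, Tendsto t atTop atTop ∧
    ∀ ε > 0, ∃ n₀ : ℕ, ∀ n ≥ n₀, ∀ x ∈ closure B, |u x (t n) - z x| ≤ ε}

/-!
Call a unit vector `e` dominant if the odd difference `w_e = u - u ∘ σ_e` is nonnegative on `B(e)`.
Since `|Δ w_e| ≤ L |w_e|`, the strong maximum principle makes a dominant `e` either strictly
dominant (`w_e > 0`) or a symmetry (`w_e = 0`). A barrier gives a maximum principle in thin layers
along the boundary of `B(e)`, uniformly in `e`, so strict dominance is an open condition.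

Let `p` maximize `u` on a sphere contained in `B`. Strict dominance forces `⟪p, e⟫ ≥ 0`, as
otherwise `σ_e p` would beat `p`. If strictly dominant directions converge to a symmetry `e` with
`⟪p, e⟫ > 0`, then `σ_e p` is a maximizer as well, although `⟪σ_e p, e⟫ < 0`: a contradiction. Hence
strict dominance is open and closed in the connected set `{e | ⟪p, e⟫ > 0}`, and all of it consists
of dominant directions. For `|x| = |y|` and `⟪x, p⟫ ≥ ⟪y, p⟫`, reflecting along `x - y` then yields
`u x ≥ u y`.
-/

open Topology
open scoped InnerProductSpace Laplacian

section Laplacian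

/-! ### The Laplacian -/

variable {E F : Type*} [NormedAddCommGroup E] [InnerProductSpace ℝ E]
  [NormedAddCommGroup F] [NormedSpace ℝ F]

lemma deriv_deriv_nonneg_of_isLocalMin {φ : ℝ → ℝ} {a : ℝ} (hmin : IsLocalMin φ a)
    (hφ : ContinuousAt φ a) : 0 ≤ deriv (deriv φ) a := by
  by_contra! hneg
  have hmax : IsLocalMax φ a := isLocalMax_of_deriv_deriv_neg hneg hmin.deriv_eq_zero hφ
  have hconst : φ =ᶠ[𝓝 a] fun _ => φ a := by
    filter_upwards [hmin, hmax] with t h₁ h₂ using le_antisymm h₂ h₁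
  simp [hconst.deriv.deriv_eq] at hneg

lemma hasDerivAt_comp_line {V : Type*} [NormedAddCommGroup V] [NormedSpace ℝ V] {f : V → F}
    {x v : V} {t : ℝ} (hf : DifferentiableAt ℝ f (x + t • v)) :
    HasDerivAt (fun s : ℝ => f (x + s • v)) (fderiv ℝ f (x + t • v) v) t := by
  have hline : HasDerivAt (fun s : ℝ => x + s • v) v t := by
    simpa using ((hasDerivAt_id t).smul_const v).const_add x
  exact hf.hasFDerivAt.comp_hasDerivAt t hline

lemma fderiv_fderiv_nonneg_of_isLocalMin {V : Type*} [NormedAddCommGroup V] [NormedSpace ℝ V]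
    {f : V → ℝ} {x : V} (hf : ContDiffAt ℝ 2 f x) (hmin : IsLocalMin f x) (v : V) :
    0 ≤ fderiv ℝ (fderiv ℝ f) x v v := by
  have hline : Tendsto (fun t : ℝ => x + t • v) (𝓝 0) (𝓝 x) :=
    Continuous.tendsto' (by fun_prop) _ _ (by simp)
  have hderiv : deriv (fun t : ℝ => f (x + t • v)) =ᶠ[𝓝 0] fun t => fderiv ℝ f (x + t • v) v := by
    filter_upwards [hline.eventually (hf.eventually (by simp))] with t ht
    exact (hasDerivAt_comp_line (ht.differentiableAt two_ne_zero)).deriv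
  have hdd : deriv (deriv fun t : ℝ => f (x + t • v)) 0 = fderiv ℝ (fderiv ℝ f) x v v := by
    have hf' : DifferentiableAt ℝ (fderiv ℝ f) (x + (0 : ℝ) • v) := by
      simpa using (hf.fderiv_right (m := 1) (by norm_num)).differentiableAt one_ne_zero
    rw [hderiv.deriv_eq]
    simpa using ((hasDerivAt_comp_line hf').clm_apply (hasDerivAt_const (0 : ℝ) v)).deriv
  rw [← hdd]
  refine deriv_deriv_nonneg_of_isLocalMin ?_ ?_
  · simpa [IsLocalMin, IsMinFilter] using hline.eventually hmin
  · exact ContinuousAt.comp' (by simpa using hf.continuousAt) (by fun_prop)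

lemma fderiv_mul_norm_sub_sq_add (α β : ℝ) (c : E) :
    fderiv ℝ (fun y => α * ‖y - c‖ ^ 2 + β) = fun x => (2 * α) • innerSL ℝ (x - c) := by
  ext x v
  have := ((((hasFDerivAt_id x).sub_const c).norm_sq.const_mul α).add_const β).fderiv
  simp only [id] at this
  rw [this]
  simp only [map_sub, ContinuousLinearMap.comp_id, smul_apply, sub_apply, coe_innerSL_apply,
    nsmul_eq_mul, Nat.cast_ofNat, smul_eq_mul]
  ring

lemma fderiv_inner_right (e : E) : fderiv ℝ (fun y => ⟪y, e⟫) = fun _ => innerSL ℝ e := by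
  have h : (fun y => ⟪y, e⟫) = innerSL ℝ e := funext fun y => real_inner_comm e y
  exact h ▸ funext fun _ => (innerSL ℝ e).fderiv

lemma contDiff_exp_mul_norm_sub_sq (c : ℝ) (y : E) {n : WithTop ℕ∞} :
    ContDiff ℝ n fun z => Real.exp (c * ‖z - y‖ ^ 2) :=
  (contDiff_const.mul ((contDiff_id.sub contDiff_const).norm_sq ℝ)).exp

variable [FiniteDimensional ℝ E]

lemma laplacian_eq_sum_fderiv_fderiv {ι : Type*} [Fintype ι] (b : OrthonormalBasis ι ℝ E)
    (f : E → F) (x : E) : Δ f x = ∑ i, fderiv ℝ (fderiv ℝ f) x (b i) (b i) := by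
  simp [InnerProductSpace.laplacian_eq_iteratedFDeriv_orthonormalBasis f b,
    iteratedFDeriv_two_apply]

lemma laplacian_comp_linearIsometryEquiv (f : E → F) (l : E ≃ₗᵢ[ℝ] E) (x : E) :
    Δ (fun y => f (l y)) x = Δ f (l x) := by
  let b := stdOrthonormalBasis ℝ E
  have hcomp := l.toContinuousLinearEquiv.iteratedFDerivWithin_comp_right f uniqueDiffOn_univ
    (mem_univ (l x)) 2
  simp only [preimage_univ, iteratedFDerivWithin_univ] at hcomp
  rw [InnerProductSpace.laplacian_eq_iteratedFDeriv_orthonormalBasis _ b,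
    InnerProductSpace.laplacian_eq_iteratedFDeriv_orthonormalBasis f (b.map l)]
  refine Finset.sum_congr rfl fun i _ => ?_
  have hvec : (fun j => l (![b i, b i] j)) = ![b.map l i, b.map l i] := by
    ext j
    fin_cases j <;> simp
  rw [← hvec]
  exact congrArg (fun A => A ![b i, b i]) hcomp

lemma laplacian_sum {ι : Type*} (s : Finset ι) {f : ι → E → F} {x : E}
    (hf : ∀ i ∈ s, ContDiffAt ℝ 2 (f i) x) :
    Δ (fun y => ∑ i ∈ s, f i y) x = ∑ i ∈ s, Δ (f i) x := by
  simp only [InnerProductSpace.laplacian_eq_iteratedFDeriv_stdOrthonormalBasis,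
    iteratedFDeriv_fun_sum_apply hf, sum_apply]
  exact Finset.sum_comm

lemma laplacian_nonneg_of_isLocalMin {f : E → ℝ} {x : E} (hf : ContDiffAt ℝ 2 f x)
    (hmin : IsLocalMin f x) : 0 ≤ Δ f x := by
  rw [laplacian_eq_sum_fderiv_fderiv (stdOrthonormalBasis ℝ E)]
  exact Finset.sum_nonneg fun i _ => fderiv_fderiv_nonneg_of_isLocalMin hf hmin _

lemma laplacian_le_of_isLocalMin_sub {f g : E → ℝ} {x : E} (hf : ContDiffAt ℝ 2 f x)
    (hg : ContDiffAt ℝ 2 g x) (hmin : IsLocalMin (f - g) x) : Δ g x ≤ Δ f x :=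
  sub_nonneg.1 <| hf.laplacian_sub hg ▸ laplacian_nonneg_of_isLocalMin (hf.sub hg) hmin

lemma laplacian_exp_mul (c : ℝ) {φ : E → ℝ} {x : E} (hφ : ContDiffAt ℝ 2 φ x) :
    Δ (fun y => Real.exp (c * φ y)) x =
      c * (c * ‖fderiv ℝ φ x‖ ^ 2 + Δ φ x) * Real.exp (c * φ x) := by
  let b := stdOrthonormalBasis ℝ E
  have hfirst : fderiv ℝ (fun y => Real.exp (c * φ y)) =ᶠ[𝓝 x]
      fun y => (c * Real.exp (c * φ y)) • fderiv ℝ φ y := by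
    filter_upwards [hφ.eventually (by simp)] with y hy
    have := ((hy.differentiableAt two_ne_zero).hasFDerivAt.const_mul c).exp.fderiv
    rw [this, smul_smul, mul_comm]
  have hd : HasFDerivAt φ (fderiv ℝ φ x) x := (hφ.differentiableAt two_ne_zero).hasFDerivAt
  have hdd : HasFDerivAt (fderiv ℝ φ) (fderiv ℝ (fderiv ℝ φ) x) x :=
    ((hφ.fderiv_right (m := 1) (by norm_num)).differentiableAt one_ne_zero).hasFDerivAt
  have hsecond := ((hd.const_mul c).exp.const_mul c).fun_smul hdd
  rw [laplacian_eq_sum_fderiv_fderiv b, hfirst.fderiv_eq, hsecond.fderiv,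
    laplacian_eq_sum_fderiv_fderiv b, b.norm_dual]
  simp only [Finset.mul_sum, Finset.sum_mul, ← Finset.sum_add_distrib]
  refine Finset.sum_congr rfl fun i _ => ?_
  simp only [add_apply, smul_apply, ContinuousLinearMap.smulRight_apply, smul_eq_mul]
  ring

lemma laplacian_mul_norm_sub_sq_add (α β : ℝ) (c x : E) :
    Δ (fun y => α * ‖y - c‖ ^ 2 + β) x = 2 * α * Module.finrank ℝ E := by
  rw [laplacian_eq_sum_fderiv_fderiv (stdOrthonormalBasis ℝ E), fderiv_mul_norm_sub_sq_add]
  have h : HasFDerivAt (fun y : E => (2 * α) • innerSL ℝ (y - c)) ((2 * α) • innerSL ℝ) x :=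
    ((innerSL ℝ).hasFDerivAt.comp x ((hasFDerivAt_id x).sub_const c)).fun_const_smul _
  rw [h.fderiv]
  simp only [smul_apply, innerSL_apply_apply ℝ, inner_self_eq_norm_sq_to_K,
    OrthonormalBasis.norm_eq_one, Real.ringHom_apply, one_pow, smul_eq_mul, mul_one,
    Finset.sum_const, Finset.card_univ, Fintype.card_fin, nsmul_eq_mul]
  ring

lemma laplacian_inner_right (e x : E) : Δ (fun y => ⟪y, e⟫) x = 0 := by
  simp [laplacian_eq_sum_fderiv_fderiv (stdOrthonormalBasis ℝ E), fderiv_inner_right]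

/-! ### The strong maximum principle -/

lemma exists_lt_laplacian_exp_neg_mul_norm_sub_sq {r : ℝ} (hr : 0 < r) (L : ℝ) :
    ∃ α > 0, ∀ x y : E, r ≤ ‖x - y‖ →
      L * Real.exp (-α * ‖x - y‖ ^ 2) < Δ (fun z => Real.exp (-α * ‖z - y‖ ^ 2)) x := by
  have hlim : Tendsto (fun α : ℝ => α * (4 * r ^ 2 * α - 2 * Module.finrank ℝ E)) atTop atTop :=
    tendsto_id.atTop_mul_atTop₀
      (tendsto_atTop_add_const_right _ _ (tendsto_id.const_mul_atTop (by positivity)))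
  obtain ⟨α, hαL, hα⟩ := ((hlim.eventually_gt_atTop L).and (eventually_gt_atTop 0)).exists
  refine ⟨α, hα, fun x y hxy => ?_⟩
  have hφ : ContDiffAt ℝ 2 (fun z => ‖z - y‖ ^ 2) x :=
    (contDiffAt_id.sub contDiffAt_const).norm_sq ℝ
  have hfderiv := congrFun (fderiv_mul_norm_sub_sq_add 1 0 y) x
  have hlap := laplacian_mul_norm_sub_sq_add 1 0 y x
  simp only [one_mul, add_zero, mul_one] at hfderiv hlap
  rw [laplacian_exp_mul (-α) hφ, hfderiv, hlap, norm_smul, innerSL_apply_norm]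
  gcongr
  have hsq : r ^ 2 ≤ ‖x - y‖ ^ 2 := by gcongr
  rw [Real.norm_ofNat]
  nlinarith [mul_pos hα hα]

-- The function `exp (-α ‖· - y‖²)`, a strict subsolution away from `y`, is slid below `w`.
lemma exists_mul_exp_sub_exp_le_of_laplacian_le {w : E → ℝ} {y : E} {R L : ℝ} (hL : 0 ≤ L)
    (hR : 0 < R) (hwc : ContinuousOn w (closedBall y R)) (hw : ContDiffOn ℝ 2 w (ball y R))
    (hnonneg : ∀ x ∈ sphere y R, 0 ≤ w x) (hΔ : ∀ x ∈ ball y R, Δ w x ≤ L * w x)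
    (hpos : 0 < w y) :
    ∃ m > 0, ∃ α > 0, ∀ x ∈ closedBall y R,
      m * (Real.exp (-α * ‖x - y‖ ^ 2) - Real.exp (-α * R ^ 2)) ≤ w x := by
  obtain ⟨m, hm, hmy⟩ := exists_between hpos
  obtain ⟨r, hr, hrm⟩ : ∃ r > 0, ∀ z, ‖z - y‖ < r → m < w z := by
    have hcont : ContinuousAt w y := hwc.continuousAt (closedBall_mem_nhds y hR)
    simpa [Metric.eventually_nhds_iff, dist_eq_norm] using hcont.eventually_const_lt hmy
  obtain ⟨α, hα, hsub⟩ := exists_lt_laplacian_exp_neg_mul_norm_sub_sq (E := E) hr L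
  refine ⟨m, hm, α, hα, fun x hx => ?_⟩
  set h : E → ℝ := fun z => Real.exp (-α * ‖z - y‖ ^ 2)
  have hh : ContDiff ℝ 2 h := contDiff_exp_mul_norm_sub_sq _ _
  obtain ⟨z, hz, hzmin⟩ := (isCompact_closedBall y R).exists_isMinOn (f := w - m • h)
    ⟨x, hx⟩ (hwc.sub (hh.continuous.const_smul m).continuousOn)
  have hxz : w z - m * h z ≤ w x - m * h x := hzmin hx
  suffices hbound : -(m * Real.exp (-α * R ^ 2)) ≤ w z - m * h z by
    change m * (h x - _) ≤ w x
    linarith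
  by_contra! hneg
  have hzball : z ∈ ball y R := by
    refine lt_of_le_of_ne (mem_closedBall.1 hz) fun hzR => ?_
    have hwz := hnonneg z hzR
    simp only [h, ← dist_eq_norm, hzR] at hneg
    linarith
  have hwz : w z ≤ m * h z := by nlinarith [Real.exp_pos (-α * R ^ 2)]
  have hrz : r ≤ ‖z - y‖ := by
    by_contra! hlt
    have hle : h z ≤ 1 := Real.exp_le_one_iff.2 (by nlinarith [sq_nonneg ‖z - y‖])
    nlinarith [hrm z hlt]
  have hcomp : Δ (m • h) z ≤ Δ w z := laplacian_le_of_isLocalMin_sub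
    (hw.contDiffAt (isOpen_ball.mem_nhds hzball)) (hh.const_smul m).contDiffAt
    (hzmin.isLocalMin (mem_of_superset (isOpen_ball.mem_nhds hzball) ball_subset_closedBall))
  rw [InnerProductSpace.laplacian_smul m hh.contDiffAt, smul_eq_mul] at hcomp
  nlinarith [hΔ z hzball, hsub z y hrz]

lemma pos_on_ball_of_laplacian_le {w : E → ℝ} {y : E} {R L : ℝ} (hL : 0 ≤ L)
    (hwc : ContinuousOn w (closedBall y R)) (hw : ContDiffOn ℝ 2 w (ball y R))
    (hnonneg : ∀ x ∈ sphere y R, 0 ≤ w x) (hΔ : ∀ x ∈ ball y R, Δ w x ≤ L * w x)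
    (hpos : 0 < w y) : ∀ x ∈ ball y R, 0 < w x := by
  intro x hx
  obtain ⟨m, hm, α, hα, hle⟩ := exists_mul_exp_sub_exp_le_of_laplacian_le hL (pos_of_mem_ball hx)
    hwc hw hnonneg hΔ hpos
  have hxR : ‖x - y‖ < R := mem_ball_iff_norm.1 hx
  refine lt_of_lt_of_le (mul_pos hm (sub_pos.2 (Real.exp_lt_exp.2 ?_)))
    (hle x (ball_subset_closedBall hx))
  rw [neg_mul, neg_mul, neg_lt_neg_iff]
  gcongr

theorem pos_or_eq_zero_of_laplacian_le {U : Set E} (hUo : IsOpen U) (hU : IsPreconnected U)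
    {w : E → ℝ} {L : ℝ} (hL : 0 ≤ L) (hw : ContDiffOn ℝ 2 w U) (hnonneg : ∀ x ∈ U, 0 ≤ w x)
    (hΔ : ∀ x ∈ U, Δ w x ≤ L * w x) : (∀ x ∈ U, 0 < w x) ∨ ∀ x ∈ U, w x = 0 := by
  have hPo : IsOpen (U ∩ w ⁻¹' Ioi 0) := hw.continuousOn.isOpen_inter_preimage hUo isOpen_Ioi
  by_cases! hP : ∃ x ∈ U, 0 < w x
  · left
    obtain ⟨x₀, hx₀, hwx₀⟩ := hP
    refine fun x hx =>
      (hU.subset_of_closure_inter_subset hPo ⟨x₀, hx₀, hx₀, hwx₀⟩ ?_ hx).2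
    rintro x ⟨hxP, hxU⟩
    obtain ⟨ε, hε, hεU⟩ := Metric.isOpen_iff.1 hUo x hxU
    obtain ⟨y, ⟨-, hwy⟩, hxy⟩ := Metric.mem_closure_iff.1 hxP (ε / 2) (half_pos hε)
    have hsub : closedBall y (ε / 2) ⊆ U :=
      (closedBall_subset_ball' (by rw [dist_comm]; linarith)).trans hεU
    exact ⟨hxU, pos_on_ball_of_laplacian_le hL (hw.continuousOn.mono hsub)
      (hw.mono (ball_subset_closedBall.trans hsub)) (fun z hz => hnonneg z (hsub (le_of_eq hz)))
      (fun z hz => hΔ z (hsub (ball_subset_closedBall hz))) hwy x hxy⟩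
  · exact .inr fun x hx => (hP x hx).antisymm (hnonneg x hx)

end Laplacian

section Barrier

/-! ### Barriers in boundary layers -/

variable {E : Type*} [NormedAddCommGroup E] [InnerProductSpace ℝ E] [FiniteDimensional ℝ E]

lemma nonneg_of_laplacian_le_of_barrier {D : Set E} (hDo : IsOpen D) (hDc : IsCompact (closure D))
    {w g : E → ℝ} {L : ℝ} (hwc : ContinuousOn w (closure D)) (hw : ContDiffOn ℝ 2 w D)
    (hfr : ∀ x ∈ frontier D, 0 ≤ w x) (hg : ContDiff ℝ 2 g) (hgpos : ∀ x ∈ closure D, 0 < g x)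
    (hΔ : ∀ x ∈ D, w x < 0 → Δ w x ≤ -L * w x ∧ Δ g x < -L * g x) : ∀ x ∈ D, 0 ≤ w x := by
  intro x hx
  by_contra! hwx
  obtain ⟨z, hz, hzmin⟩ := hDc.exists_isMinOn (f := fun y => w y / g y) ⟨x, subset_closure hx⟩
    (hwc.div hg.continuous.continuousOn fun y hy => (hgpos y hy).ne')
  set m := w z / g z
  have hmneg : m < 0 :=
    (hzmin (subset_closure hx)).trans_lt (div_neg_of_neg_of_pos hwx (hgpos x (subset_closure hx)))
  have hwz : w z = m * g z := (div_mul_cancel₀ _ (hgpos z hz).ne').symm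
  have hwz_neg : w z < 0 := hwz ▸ mul_neg_of_neg_of_pos hmneg (hgpos z hz)
  have hzD : z ∈ D := by
    by_contra hzD
    exact hwz_neg.not_ge (hfr z ⟨hz, hDo.interior_eq.symm ▸ hzD⟩)
  have hmin : IsLocalMin (w - m • g) z := by
    filter_upwards [hDo.mem_nhds hzD] with y hy
    have hmy : m ≤ w y / g y := hzmin (subset_closure hy)
    rw [le_div_iff₀ (hgpos y (subset_closure hy))] at hmy
    simpa [hwz] using hmy
  have hcomp : Δ (m • g) z ≤ Δ w z := laplacian_le_of_isLocalMin_sub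
    (hw.contDiffAt (hDo.mem_nhds hzD)) (hg.const_smul m).contDiffAt hmin
  rw [InnerProductSpace.laplacian_smul m hg.contDiffAt, smul_eq_mul] at hcomp
  obtain ⟨hΔw, hΔg⟩ := hΔ z hzD hwz_neg
  rw [hwz] at hΔw
  linarith [mul_lt_mul_of_neg_left hΔg hmneg]

/-- The barrier `#ι + 1 - ∑ᵢ exp (-M φᵢ)`. For large `M` it is a positive strict supersolution in
the layer of width `1 / M` along the boundary of `{x | ∀ i, 0 < φᵢ x}`. -/
def layerBarrier {X ι : Type*} [Fintype ι] (φ : ι → X → ℝ) (M : ℝ) (x : X) : ℝ :=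
  Fintype.card ι + 1 - ∑ i, Real.exp (-M * φ i x)

lemma one_le_layerBarrier {X ι : Type*} [Fintype ι] {φ : ι → X → ℝ} {M : ℝ} {x : X} (hM : 0 ≤ M)
    (hx : ∀ i, 0 ≤ φ i x) : 1 ≤ layerBarrier φ M x := by
  have hsum : ∑ i, Real.exp (-M * φ i x) ≤ ∑ _i : ι, 1 :=
    Finset.sum_le_sum fun i _ => Real.exp_le_one_iff.2 (by nlinarith [hx i])
  simp only [Finset.sum_const, Finset.card_univ, nsmul_one] at hsum
  unfold layerBarrier
  linarith

lemma contDiff_layerBarrier {V ι : Type*} [NormedAddCommGroup V] [NormedSpace ℝ V] [Fintype ι]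
    {φ : ι → V → ℝ} {M : ℝ} {n : WithTop ℕ∞} (hφ : ∀ i, ContDiff ℝ n (φ i)) :
    ContDiff ℝ n (layerBarrier φ M) :=
  contDiff_const.sub (ContDiff.sum fun i _ => (contDiff_const.mul (hφ i)).exp)

variable {ι : Type*} [Fintype ι] {φ : ι → E → ℝ} {M : ℝ} {x : E}

lemma laplacian_layerBarrier (hφ : ∀ i, ContDiff ℝ 2 (φ i)) :
    Δ (layerBarrier φ M) x =
      -∑ i, M * (M * ‖fderiv ℝ (φ i) x‖ ^ 2 - Δ (φ i) x) * Real.exp (-M * φ i x) := by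
  have hexp (i : ι) : ContDiffAt ℝ 2 (fun y => Real.exp (-M * φ i y)) x :=
    (contDiff_const.mul (hφ i)).exp.contDiffAt
  have hsub := (contDiffAt_const (c := (Fintype.card ι + 1 : ℝ))).laplacian_sub
    (ContDiffAt.sum (s := Finset.univ) fun i _ => hexp i)
  refine hsub.trans ?_
  simp only [laplacian_sum _ fun i _ => hexp i, laplacian_exp_mul _ (hφ _).contDiffAt,
    InnerProductSpace.laplacian_const]
  simp only [Pi.zero_apply, zero_sub, neg_inj]
  exact Finset.sum_congr rfl fun i _ => by ring

lemma laplacian_layerBarrier_lt {L : ℝ} (hL : 0 ≤ L) (hM : 0 < M)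
    (hLM : L * (Fintype.card ι + 1) < M * Real.exp (-1)) (hφ : ∀ i, ContDiff ℝ 2 (φ i))
    (hgrad : ∀ i, 1 ≤ M * ‖fderiv ℝ (φ i) x‖ ^ 2 - Δ (φ i) x) {i : ι} (hi : φ i x ≤ M⁻¹) :
    Δ (layerBarrier φ M) x < -L * layerBarrier φ M x := by
  have hexp : Real.exp (-1) ≤ Real.exp (-M * φ i x) := by
    gcongr
    nlinarith [mul_inv_cancel₀ hM.ne', mul_le_mul_of_nonneg_left hi hM.le]
  have hterm (j : ι) : M * Real.exp (-M * φ j x) ≤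
      M * (M * ‖fderiv ℝ (φ j) x‖ ^ 2 - Δ (φ j) x) * Real.exp (-M * φ j x) := by
    gcongr
    exact le_mul_of_one_le_right hM.le (hgrad j)
  have hΔ : Δ (layerBarrier φ M) x ≤ -(M * Real.exp (-1)) := by
    rw [laplacian_layerBarrier hφ, neg_le_neg_iff]
    calc M * Real.exp (-1) ≤ M * Real.exp (-M * φ i x) := by gcongr
      _ ≤ ∑ j, M * Real.exp (-M * φ j x) :=
        Finset.single_le_sum (f := fun j => M * Real.exp (-M * φ j x))
          (fun j _ => by positivity) (Finset.mem_univ i)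
      _ ≤ _ := Finset.sum_le_sum fun j _ => hterm j
  have hle : layerBarrier φ M x ≤ Fintype.card ι + 1 :=
    sub_le_self _ (Finset.sum_nonneg fun j _ => (Real.exp_pos _).le)
  nlinarith

end Barrier

section RadialDomain

/-! ### Radial domains -/

lemma isPreconnected_setOf_norm_mem_inner_pos {E : Type*} [NormedAddCommGroup E]
    [InnerProductSpace ℝ E] {I : Set ℝ} (hI : IsPreconnected I) (hI₀ : I ⊆ Ioi 0) (e : E) :
    IsPreconnected {x : E | ‖x‖ ∈ I ∧ 0 < ⟪x, e⟫} := by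
  have hhalf : Convex ℝ {y : E | 0 < ⟪y, e⟫} :=
    convex_halfSpace_gt (IsLinearMap.mk (fun x y => inner_add_left x y e)
      (fun c x => real_inner_smul_left x e c)) 0
  have himage : {x : E | ‖x‖ ∈ I ∧ 0 < ⟪x, e⟫} =
      (fun q : ℝ × E => (q.1 / ‖q.2‖) • q.2) '' (I ×ˢ {y | 0 < ⟪y, e⟫}) := by
    ext x
    constructor
    · rintro ⟨hxI, hxe⟩
      have hx : ‖x‖ ≠ 0 := (hI₀ hxI).ne'
      exact ⟨(‖x‖, x), ⟨hxI, hxe⟩, by simp [hx]⟩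
    · rintro ⟨⟨t, y⟩, ⟨ht, hy⟩, rfl⟩
      have ht₀ : 0 < t := hI₀ ht
      have hy₀ : 0 < ‖y‖ := norm_pos_iff.2 fun h => by simp [h] at hy
      refine ⟨?_, ?_⟩
      · simpa [norm_smul, abs_of_pos ht₀, hy₀.ne'] using ht
      · simp only [mem_ofPred_eq] at hy
        simp only [real_inner_smul_left]
        positivity
  rw [himage]
  refine (hI.prod hhalf.isPreconnected).image _ fun q hq => ContinuousAt.continuousWithinAt ?_
  have hq₂ : ‖q.2‖ ≠ 0 := norm_ne_zero_iff.2 fun h => by simp [h] at hq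
  fun_prop (disch := exact hq₂)

lemma isClosed_setOf_forall_le {X ι : Type*} [TopologicalSpace X] {ψ : ι → X → ℝ}
    (hψ : ∀ i, Continuous (ψ i)) (c : ℝ) : IsClosed {x | ∀ i, c ≤ ψ i x} := by
  simpa only [ofPred_forall] using isClosed_iInter fun i => isClosed_le continuous_const (hψ i)

variable {B : Set (EuclideanSpace ℝ (Fin N))}

lemma IsRadialDomain.isOpen (hB : IsRadialDomain B) : IsOpen B := by
  obtain ⟨R, -, rfl⟩ | ⟨r, R, -, -, rfl⟩ := hB
  · exact isOpen_ball
  · exact (isOpen_lt continuous_const continuous_norm).inter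
      (isOpen_lt continuous_norm continuous_const)

lemma IsRadialDomain.isCompact_closure (hB : IsRadialDomain B) : IsCompact (closure B) := by
  obtain ⟨R, -, rfl⟩ | ⟨r, R, -, -, rfl⟩ := hB
  · exact isBounded_ball.isCompact_closure
  · refine Bornology.IsBounded.isCompact_closure ((isBounded_ball (x := 0) (r := R)).subset ?_)
    exact fun x hx => mem_ball_zero_iff.2 hx.2

lemma IsRadialDomain.mem_iff_of_norm_eq (hB : IsRadialDomain B) {x y : EuclideanSpace ℝ (Fin N)}
    (hxy : ‖x‖ = ‖y‖) : x ∈ B ↔ y ∈ B := by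
  obtain ⟨R, -, rfl⟩ | ⟨r, R, -, -, rfl⟩ := hB
  · simp [hxy]
  · simp [hxy]

lemma IsRadialDomain.exists_sphere_subset (hB : IsRadialDomain B) : ∃ ρ > 0, sphere 0 ρ ⊆ B := by
  obtain ⟨R, hR, rfl⟩ | ⟨r, R, hr, hrR, rfl⟩ := hB
  · exact ⟨R / 2, half_pos hR, sphere_subset_ball (half_lt_self hR)⟩
  · refine ⟨(r + R) / 2, by linarith, fun x hx => ?_⟩
    simp only [mem_sphere_zero_iff_norm] at hx
    constructor <;> linarith

lemma IsRadialDomain.isPreconnected_halfDom (hB : IsRadialDomain B)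
    (e : EuclideanSpace ℝ (Fin N)) : IsPreconnected (halfDom B e) := by
  obtain ⟨a, R, ha, hhalf⟩ : ∃ a R : ℝ, 0 ≤ a ∧
      halfDom B e = {x | ‖x‖ ∈ Ioo a R ∧ 0 < ⟪x, e⟫} := by
    obtain ⟨R, -, rfl⟩ | ⟨r, R, hr, -, rfl⟩ := hB
    · refine ⟨0, R, le_rfl, Set.ext fun x => ?_⟩
      have hx₀ (hx : 0 < ⟪x, e⟫) : x ≠ 0 := fun h => by simp [h] at hx
      simp +contextual [halfDom, hx₀]
    · exact ⟨r, R, hr.le, rfl⟩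
  rw [hhalf]
  exact isPreconnected_setOf_norm_mem_inner_pos isPreconnected_Ioo
    (fun t ht => ha.trans_lt ht.1) e

lemma IsRadialDomain.exists_defining_quadratics (hB : IsRadialDomain B) (hN : 0 < N) :
    ∃ (n : ℕ) (α β : Fin n → ℝ) (M₀ : ℝ), B = {x | ∀ i, 0 < α i * ‖x‖ ^ 2 + β i} ∧
      ∀ M ≥ M₀, ∀ i, ∀ x ∈ B, 1 ≤ M * (4 * α i ^ 2 * ‖x‖ ^ 2) - 2 * α i * N := by
  have hN' : (1 : ℝ) ≤ N := by exact_mod_cast hN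
  obtain ⟨R, hR, rfl⟩ | ⟨r, R, hr, hrR, rfl⟩ := hB
  · refine ⟨1, fun _ => -1, fun _ => R ^ 2, 0, ?_, fun M hM _ x _ => ?_⟩
    · ext x
      simp [sq_lt_sq₀, hR.le]
    · nlinarith [mul_nonneg hM (sq_nonneg ‖x‖)]
  · refine ⟨2, ![-1, 1], ![R ^ 2, -r ^ 2], N / r ^ 2, ?_, fun M hM i x hx => ?_⟩
    · ext x
      simp [sq_lt_sq₀, hr.le, (hr.trans hrR).le, Fin.forall_fin_two, and_comm]
    · have hM₀ : 0 ≤ M := le_trans (by positivity) hM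
      have hMN : N ≤ M * ‖x‖ ^ 2 := by
        calc (N : ℝ) ≤ M * r ^ 2 := (div_le_iff₀ (by positivity)).1 hM
          _ ≤ M * ‖x‖ ^ 2 := by gcongr; exact hx.1.le
      fin_cases i <;> simp <;> linarith

lemma IsRadialDomain.exists_defining_functions (hB : IsRadialDomain B) (hN : 0 < N) :
    ∃ (n : ℕ) (ψ : Fin n → EuclideanSpace ℝ (Fin N) → ℝ) (M₀ : ℝ), (∀ i, ContDiff ℝ 2 (ψ i)) ∧
      B = {x | ∀ i, 0 < ψ i x} ∧
      ∀ M ≥ M₀, ∀ i, ∀ x ∈ B, 1 ≤ M * ‖fderiv ℝ (ψ i) x‖ ^ 2 - Δ (ψ i) x := by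
  obtain ⟨n, α, β, M₀, hBeq, hM₀⟩ := hB.exists_defining_quadratics hN
  refine ⟨n, fun i x => α i * ‖x - 0‖ ^ 2 + β i, M₀, fun i => ?_, ?_, fun M hM i x hx => ?_⟩
  · exact (contDiff_const.mul ((contDiff_id.sub contDiff_const).norm_sq ℝ)).add contDiff_const
  · simpa using hBeq
  · have hgrad : ‖(2 * α i) • innerSL ℝ (x - 0)‖ ^ 2 = 4 * α i ^ 2 * ‖x‖ ^ 2 := by
      rw [norm_smul, innerSL_apply_norm, sub_zero, mul_pow, Real.norm_eq_abs, sq_abs]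
      ring
    rw [fderiv_mul_norm_sub_sq_add, hgrad, laplacian_mul_norm_sub_sq_add,
      finrank_euclideanSpace_fin]
    exact hM₀ M hM i x hx

lemma closure_halfDom_subset (B : Set (EuclideanSpace ℝ (Fin N))) (e : EuclideanSpace ℝ (Fin N)) :
    closure (halfDom B e) ⊆ {x ∈ closure B | 0 ≤ ⟪x, e⟫} :=
  fun _ hx => ⟨closure_mono (sep_subset _ _) hx, closure_minimal (t := {x | 0 ≤ ⟪x, e⟫})
    (fun _ hy => hy.2.le) (isClosed_le continuous_const (continuous_id.inner continuous_const)) hx⟩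

lemma IsRadialDomain.isOpen_halfDom (hB : IsRadialDomain B) (e : EuclideanSpace ℝ (Fin N)) :
    IsOpen (halfDom B e) := by
  have hhalf : IsOpen {x : EuclideanSpace ℝ (Fin N) | 0 < ⟪x, e⟫} :=
    isOpen_lt continuous_const (continuous_id.inner continuous_const)
  exact hB.isOpen.inter hhalf

lemma IsRadialDomain.exists_barrier (hB : IsRadialDomain B) (hN : 0 < N) {L : ℝ} (hL : 0 ≤ L) :
    ∃ K ⊆ B, IsCompact K ∧ ∃ δ > 0, ∀ e : EuclideanSpace ℝ (Fin N), ‖e‖ = 1 →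
      ∃ g : EuclideanSpace ℝ (Fin N) → ℝ, ContDiff ℝ 2 g ∧
        (∀ x ∈ closure (halfDom B e), 0 < g x) ∧
        ∀ x ∈ halfDom B e, (x ∈ K → ⟪x, e⟫ < δ) → Δ g x < -L * g x := by
  obtain ⟨n, ψ, M₀, hψ, hBψ, hM₀⟩ := hB.exists_defining_functions hN
  obtain ⟨M, hM, hM₁, hLM⟩ : ∃ M ≥ M₀, 1 ≤ M ∧ L * (n + 1 + 1) < M * Real.exp (-1) :=
    ((eventually_ge_atTop M₀).and ((eventually_ge_atTop 1).and
      ((tendsto_id.atTop_mul_const (Real.exp_pos (-1))).eventually_gt_atTop _))).exists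
  have hM_pos : 0 < M := one_pos.trans_le hM₁
  let φ (e : EuclideanSpace ℝ (Fin N)) (i : Option (Fin n)) : EuclideanSpace ℝ (Fin N) → ℝ :=
    i.elim (fun x => ⟪x, e⟫) ψ
  have hφ (e) : ∀ i, ContDiff ℝ 2 (φ e i) :=
    Option.forall.2 ⟨contDiff_id.inner ℝ contDiff_const, hψ⟩
  have hgrad {e x : EuclideanSpace ℝ (Fin N)} (he : ‖e‖ = 1) (hx : x ∈ B) :
      ∀ i, 1 ≤ M * ‖fderiv ℝ (φ e i) x‖ ^ 2 - Δ (φ e i) x :=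
    Option.forall.2 ⟨by simpa [φ, fderiv_inner_right, laplacian_inner_right, he],
      fun i => hM₀ M hM i x hx⟩
  have hclosure : closure B ⊆ {x | ∀ i, 0 ≤ ψ i x} :=
    closure_minimal (hBψ ▸ fun x hx i => (hx i).le)
      (isClosed_setOf_forall_le (fun i => (hψ i).continuous) 0)
  refine ⟨closure B ∩ {x | ∀ i, M⁻¹ ≤ ψ i x}, ?_, hB.isCompact_closure.inter_right
    (isClosed_setOf_forall_le (fun i => (hψ i).continuous) _), M⁻¹, inv_pos.2 hM_pos, fun e he =>
      ⟨layerBarrier (φ e) M, contDiff_layerBarrier (hφ e), fun x hx => ?_, fun x hx hxK => ?_⟩⟩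
  · rw [hBψ]
    exact fun x hx i => (inv_pos.2 hM_pos).trans_le (hx.2 i)
  · obtain ⟨hxB, hxe⟩ := closure_halfDom_subset B e hx
    exact one_pos.trans_le
      (one_le_layerBarrier hM_pos.le (Option.forall.2 ⟨hxe, hclosure hxB⟩))
  · obtain ⟨i, hi⟩ : ∃ i, φ e i x ≤ M⁻¹ := by
      by_contra! hdeep
      obtain ⟨hdeep_e, hdeep_ψ⟩ := Option.forall.1 hdeep
      exact (hxK ⟨subset_closure hx.1, fun i => (hdeep_ψ i).le⟩).not_gt hdeep_e
    exact laplacian_layerBarrier_lt hL hM_pos (by simpa using hLM) (hφ e) (hgrad he hx.1) hi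

end RadialDomain

section Reflection

/-! ### Reflections -/

lemma inner_normalize_right {E : Type*} [NormedAddCommGroup E] [InnerProductSpace ℝ E] (x v : E) :
    ⟪x, NormedSpace.normalize v⟫ = ‖v‖⁻¹ * ⟪x, v⟫ :=
  real_inner_smul_right x v ‖v‖⁻¹

lemma inner_sub_right_pos {E : Type*} [NormedAddCommGroup E] [InnerProductSpace ℝ E] {x y : E}
    (hxy : ‖x‖ = ‖y‖) (hne : x ≠ y) : 0 < ⟪x, x - y⟫ := by
  have hpos : 0 < ‖x - y‖ := norm_pos_iff.2 (sub_ne_zero.2 hne)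
  have hsq := norm_sub_sq_real x y
  rw [inner_sub_right, real_inner_self_eq_norm_sq]
  rw [← hxy] at hsq
  nlinarith

lemma reflHyp_normalize (v x : EuclideanSpace ℝ (Fin N)) :
    reflHyp (NormedSpace.normalize v) x = (ℝ ∙ v)ᗮ.reflection x := by
  rw [Submodule.reflection_orthogonal_apply, Submodule.reflection_singleton_apply, reflHyp,
    inner_normalize_right, NormedSpace.normalize, real_inner_comm]
  simp only [RCLike.ofReal_real_eq_id, id]
  match_scalars <;> ring

variable {e : EuclideanSpace ℝ (Fin N)}

lemma pos_of_norm_eq_one (he : ‖e‖ = 1) : 0 < N :=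
  Nat.pos_of_ne_zero fun hN => by
    subst hN
    simp [Subsingleton.elim e 0] at he

lemma reflHyp_eq_reflection (he : ‖e‖ = 1) (x : EuclideanSpace ℝ (Fin N)) :
    reflHyp e x = (ℝ ∙ e)ᗮ.reflection x := by
  rw [← reflHyp_normalize, NormedSpace.normalize_eq_self_of_norm_eq_one he]

lemma norm_reflHyp (he : ‖e‖ = 1) (x : EuclideanSpace ℝ (Fin N)) : ‖reflHyp e x‖ = ‖x‖ := by
  rw [reflHyp_eq_reflection he, LinearIsometryEquiv.norm_map]

lemma inner_reflHyp_self (he : ‖e‖ = 1) (x : EuclideanSpace ℝ (Fin N)) :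
    ⟪reflHyp e x, e⟫ = -⟪x, e⟫ := by
  rw [reflHyp, inner_sub_left, real_inner_smul_left, real_inner_self_eq_norm_sq, he]
  ring

lemma reflHyp_reflHyp (he : ‖e‖ = 1) (x : EuclideanSpace ℝ (Fin N)) :
    reflHyp e (reflHyp e x) = x := by
  rw [reflHyp_eq_reflection he, reflHyp_eq_reflection he, Submodule.reflection_reflection]

lemma continuous_uncurry_reflHyp :
    Continuous fun q : EuclideanSpace ℝ (Fin N) × EuclideanSpace ℝ (Fin N) => reflHyp q.1 q.2 := by
  unfold reflHyp
  fun_prop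

lemma IsRadialDomain.reflHyp_mem_iff {B : Set (EuclideanSpace ℝ (Fin N))} (hB : IsRadialDomain B)
    (he : ‖e‖ = 1) {x : EuclideanSpace ℝ (Fin N)} : reflHyp e x ∈ B ↔ x ∈ B :=
  hB.mem_iff_of_norm_eq (norm_reflHyp he x)

lemma IsRadialDomain.reflHyp_mem_closure {B : Set (EuclideanSpace ℝ (Fin N))}
    (hB : IsRadialDomain B) (he : ‖e‖ = 1) {x : EuclideanSpace ℝ (Fin N)} (hx : x ∈ closure B) :
    reflHyp e x ∈ closure B :=
  map_mem_closure (continuous_uncurry_reflHyp.comp (.prodMk_right e)) hx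
    fun _ => (hB.reflHyp_mem_iff he).2

end Reflection

section Solution

/-! ### Dominant directions -/

variable {B : Set (EuclideanSpace ℝ (Fin N))} {u : EuclideanSpace ℝ (Fin N) → ℝ} {L : ℝ}
  {e : EuclideanSpace ℝ (Fin N)}

/-- What the argument uses of a solution of `-Δu = f(|x|, u)` with radial boundary data: the values
of `Δu` at two points of equal norm differ by at most `L` times the difference of the values of
`u`. -/
structure IsRadialSolution (B : Set (EuclideanSpace ℝ (Fin N))) (L : ℝ)
    (u : EuclideanSpace ℝ (Fin N) → ℝ) : Prop where
  isRadialDomain : IsRadialDomain B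
  nonneg : 0 ≤ L
  continuousOn : ContinuousOn u (closure B)
  contDiffOn : ContDiffOn ℝ 2 u B
  abs_laplacian_sub_le : ∀ x ∈ B, ∀ y ∈ B, ‖x‖ = ‖y‖ → |Δ u x - Δ u y| ≤ L * |u x - u y|
  eq_of_mem_frontier : ∀ x ∈ frontier B, ∀ y ∈ frontier B, ‖x‖ = ‖y‖ → u x = u y

/-- The difference `w_e = u - u ∘ σ_e`. -/
def reflDiff (u : EuclideanSpace ℝ (Fin N) → ℝ) (e x : EuclideanSpace ℝ (Fin N)) : ℝ :=
  u x - u (reflHyp e x)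

/-- `e` is a dominant direction of `u` on `B`: `u ≥ u ∘ σ_e` on `B(e)`. -/
def IsDominant (B : Set (EuclideanSpace ℝ (Fin N))) (u : EuclideanSpace ℝ (Fin N) → ℝ)
    (e : EuclideanSpace ℝ (Fin N)) : Prop :=
  ∀ x ∈ halfDom B e, 0 ≤ reflDiff u e x

/-- `e` is a strictly dominant direction of `u` on `B`: `u > u ∘ σ_e` on `B(e)`. -/
def IsStrictlyDominant (B : Set (EuclideanSpace ℝ (Fin N))) (u : EuclideanSpace ℝ (Fin N) → ℝ)
    (e : EuclideanSpace ℝ (Fin N)) : Prop :=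
  ∀ x ∈ halfDom B e, 0 < reflDiff u e x

namespace IsRadialSolution

lemma contDiffAt (hu : IsRadialSolution B L u) {x : EuclideanSpace ℝ (Fin N)} (hx : x ∈ B) :
    ContDiffAt ℝ 2 u x :=
  hu.contDiffOn.contDiffAt (hu.isRadialDomain.isOpen.mem_nhds hx)

lemma contDiffAt_comp_reflHyp (hu : IsRadialSolution B L u) (he : ‖e‖ = 1)
    {x : EuclideanSpace ℝ (Fin N)} (hx : x ∈ B) : ContDiffAt ℝ 2 (fun y => u (reflHyp e y)) x := by
  have hux := hu.contDiffAt ((hu.isRadialDomain.reflHyp_mem_iff he).2 hx)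
  simp only [reflHyp_eq_reflection he] at hux ⊢
  exact hux.comp x (LinearIsometryEquiv.contDiff _).contDiffAt

lemma contDiffOn_reflDiff (hu : IsRadialSolution B L u) (he : ‖e‖ = 1) :
    ContDiffOn ℝ 2 (reflDiff u e) B := fun _ hx =>
  ((hu.contDiffAt hx).sub (hu.contDiffAt_comp_reflHyp he hx)).contDiffWithinAt

lemma continuousOn_reflDiff (hu : IsRadialSolution B L u) (he : ‖e‖ = 1) :
    ContinuousOn (reflDiff u e) (closure B) := by
  have hcont : Continuous (reflHyp e) := continuous_uncurry_reflHyp.comp (.prodMk_right e)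
  exact hu.continuousOn.sub (hu.continuousOn.comp hcont.continuousOn
    fun _ => (hu.isRadialDomain.reflHyp_mem_closure he))

lemma continuousAt_uncurry_reflDiff (hu : IsRadialSolution B L u) (he : ‖e‖ = 1)
    {x : EuclideanSpace ℝ (Fin N)} (hx : x ∈ B) :
    ContinuousAt (fun q : EuclideanSpace ℝ (Fin N) × EuclideanSpace ℝ (Fin N) =>
      reflDiff u q.1 q.2) (e, x) := by
  have hσx := hu.contDiffAt ((hu.isRadialDomain.reflHyp_mem_iff he).2 hx)
  exact ((hu.contDiffAt hx).continuousAt.comp continuousAt_snd).sub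
    (hσx.continuousAt.comp (x := (e, x)) (f := fun q : EuclideanSpace ℝ (Fin N) ×
      EuclideanSpace ℝ (Fin N) => reflHyp q.1 q.2) continuous_uncurry_reflHyp.continuousAt)

lemma abs_laplacian_reflDiff_le (hu : IsRadialSolution B L u) (he : ‖e‖ = 1)
    {x : EuclideanSpace ℝ (Fin N)} (hx : x ∈ B) :
    |Δ (reflDiff u e) x| ≤ L * |reflDiff u e x| := by
  have hΔ : Δ (reflDiff u e) x = Δ u x - Δ u (reflHyp e x) := by
    refine ((hu.contDiffAt hx).laplacian_sub (hu.contDiffAt_comp_reflHyp he hx)).trans ?_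
    simp only [reflHyp_eq_reflection he, laplacian_comp_linearIsometryEquiv]
  rw [hΔ]
  exact hu.abs_laplacian_sub_le x hx _ ((hu.isRadialDomain.reflHyp_mem_iff he).2 hx)
    (norm_reflHyp he x).symm

lemma reflDiff_eq_zero_of_mem_frontier (hu : IsRadialSolution B L u) (he : ‖e‖ = 1)
    {x : EuclideanSpace ℝ (Fin N)} (hx : x ∈ frontier (halfDom B e)) : reflDiff u e x = 0 := by
  obtain ⟨hxB, hxe⟩ := closure_halfDom_subset B e hx.1
  have hx_notMem : x ∉ halfDom B e :=
    ((hu.isRadialDomain.isOpen_halfDom e).frontier_eq.subset hx).2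
  by_cases hxB' : x ∈ B
  · have hxe₀ : ⟪x, e⟫ = 0 := le_antisymm (not_lt.1 fun h => hx_notMem ⟨hxB', h⟩) hxe
    simp [reflDiff, reflHyp, hxe₀]
  · rw [reflDiff, sub_eq_zero]
    exact hu.eq_of_mem_frontier x ⟨hxB, notMem_subset interior_subset hxB'⟩ _
      ⟨hu.isRadialDomain.reflHyp_mem_closure he hxB, notMem_subset interior_subset
        (mt (hu.isRadialDomain.reflHyp_mem_iff he).1 hxB')⟩ (norm_reflHyp he x).symm

lemma isStrictlyDominant_or_eq_zero (hu : IsRadialSolution B L u) (he : ‖e‖ = 1)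
    (hdom : IsDominant B u e) :
    IsStrictlyDominant B u e ∨ ∀ x ∈ halfDom B e, reflDiff u e x = 0 := by
  refine pos_or_eq_zero_of_laplacian_le (hu.isRadialDomain.isOpen_halfDom e)
    (hu.isRadialDomain.isPreconnected_halfDom e) hu.nonneg
    ((hu.contDiffOn_reflDiff he).mono (sep_subset _ _)) hdom fun x hx => ?_
  simpa [abs_of_nonneg (hdom x hx)] using (abs_le.1 (hu.abs_laplacian_reflDiff_le he hx.1)).2

lemma exists_isCompact_isDominant (hu : IsRadialSolution B L u) (hN : 0 < N) :
    ∃ K ⊆ B, IsCompact K ∧ ∃ δ > 0, ∀ e : EuclideanSpace ℝ (Fin N), ‖e‖ = 1 →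
      (∀ x ∈ K, δ ≤ ⟪x, e⟫ → 0 ≤ reflDiff u e x) → IsDominant B u e := by
  obtain ⟨K, hKB, hK, δ, hδ, hbarrier⟩ := hu.isRadialDomain.exists_barrier hN hu.nonneg
  refine ⟨K, hKB, hK, δ, hδ, fun e he hcore => ?_⟩
  obtain ⟨g, hg, hgpos, hΔg⟩ := hbarrier e he
  have hsub : halfDom B e ⊆ B := sep_subset _ _
  refine nonneg_of_laplacian_le_of_barrier (L := L) (hu.isRadialDomain.isOpen_halfDom e)
    (hu.isRadialDomain.isCompact_closure.of_isClosed_subset isClosed_closure (closure_mono hsub))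
    ((hu.continuousOn_reflDiff he).mono (closure_mono hsub))
    ((hu.contDiffOn_reflDiff he).mono hsub)
    (fun x hx => (hu.reflDiff_eq_zero_of_mem_frontier he hx).ge) hg hgpos fun x hx hneg => ⟨?_, ?_⟩
  · have hle := (abs_le.1 (hu.abs_laplacian_reflDiff_le he hx.1)).2
    rwa [abs_of_neg hneg, mul_neg, ← neg_mul] at hle
  · exact hΔg x hx fun hxK => not_le.1 fun hδx => hneg.not_ge (hcore x hxK hδx)

lemma isStrictlyDominant_of_pos (hu : IsRadialSolution B L u) (he : ‖e‖ = 1)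
    (hdom : IsDominant B u e) {x : EuclideanSpace ℝ (Fin N)} (hx : x ∈ halfDom B e)
    (hpos : 0 < reflDiff u e x) : IsStrictlyDominant B u e :=
  (hu.isStrictlyDominant_or_eq_zero he hdom).resolve_right fun h => hpos.ne' (h x hx)

lemma eventually_reflDiff_pos (hu : IsRadialSolution B L u) (he : ‖e‖ = 1)
    {x : EuclideanSpace ℝ (Fin N)} (hx : x ∈ B) (hpos : 0 < reflDiff u e x) :
    ∀ᶠ q : EuclideanSpace ℝ (Fin N) × EuclideanSpace ℝ (Fin N) in 𝓝 (e, x),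
      0 < reflDiff u q.1 q.2 :=
  (hu.continuousAt_uncurry_reflDiff he hx).eventually (lt_mem_nhds hpos)

lemma eventually_isDominant (hu : IsRadialSolution B L u) (he : ‖e‖ = 1)
    (hdom : IsStrictlyDominant B u e) :
    ∀ᶠ e' in 𝓝 e, ‖e'‖ = 1 → IsDominant B u e' := by
  obtain ⟨K, hKB, hK, δ, hδ, hcore⟩ := hu.exists_isCompact_isDominant (pos_of_norm_eq_one he)
  have hK_eventually : ∀ᶠ e' in 𝓝 e, ∀ x ∈ K, δ ≤ ⟪x, e'⟫ → 0 ≤ reflDiff u e' x := by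
    refine hK.eventually_forall_of_forall_eventually fun x hx => ?_
    obtain hδx | hδx := lt_or_ge ⟪x, e⟫ δ
    · have hcont : Continuous fun q : EuclideanSpace ℝ (Fin N) × EuclideanSpace ℝ (Fin N) =>
          ⟪q.2, q.1⟫ := continuous_snd.inner continuous_fst
      filter_upwards [(hcont.tendsto (e, x)).eventually (gt_mem_nhds hδx)] with q hq hδq
      exact absurd hδq hq.not_ge
    · have hpos := hdom x ⟨hKB hx, hδ.trans_le hδx⟩
      filter_upwards [hu.eventually_reflDiff_pos he (hKB hx) hpos] with q hq _ using hq.le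
  filter_upwards [hK_eventually] with e' he' he'_norm using hcore e' he'_norm he'

lemma eventually_isStrictlyDominant (hu : IsRadialSolution B L u) (he : ‖e‖ = 1)
    (hdom : IsStrictlyDominant B u e) :
    ∀ᶠ e' in 𝓝 e, ‖e'‖ = 1 → IsStrictlyDominant B u e' := by
  obtain ⟨ρ, hρ, hρB⟩ := hu.isRadialDomain.exists_sphere_subset
  have hx : ρ • e ∈ B := hρB (by simp [norm_smul, he, hρ.le])
  have hxe : 0 < ⟪ρ • e, e⟫ := by simpa [real_inner_smul_left, he] using hρ
  have hcont : Continuous fun e' : EuclideanSpace ℝ (Fin N) => ⟪ρ • e, e'⟫ :=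
    continuous_const.inner continuous_id
  filter_upwards [hu.eventually_isDominant he hdom,
    (hcont.tendsto e).eventually (lt_mem_nhds hxe),
    (hu.eventually_reflDiff_pos he hx (hdom _ ⟨hx, hxe⟩)).curry_nhds.mono
      fun _ h => h.self_of_nhds] with e' hdom' hxe' hpos he'
  exact hu.isStrictlyDominant_of_pos he' (hdom' he') ⟨hx, hxe'⟩ hpos

lemma isDominant_of_mem_closure (hu : IsRadialSolution B L u) (he : ‖e‖ = 1)
    (hcl : e ∈ closure {e' | IsDominant B u e'}) : IsDominant B u e := by
  intro x hx
  by_contra! hneg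
  have hcont : Continuous fun e' : EuclideanSpace ℝ (Fin N) => ⟪x, e'⟫ :=
    continuous_const.inner continuous_id
  have hw : ContinuousAt (fun e' => reflDiff u e' x) e :=
    (hu.continuousAt_uncurry_reflDiff he hx.1).comp (f := fun e' => (e', x)) (by fun_prop)
  obtain ⟨e', hdom', hxe', hneg'⟩ := ((mem_closure_iff_frequently.1 hcl).and_eventually
    (((hcont.tendsto e).eventually (lt_mem_nhds hx.2)).and
      (hw.eventually (gt_mem_nhds hneg)))).exists
  exact hneg'.not_ge (hdom' x ⟨hx.1, hxe'⟩)

end IsRadialSolution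

end Solution

section Axis

/-! ### The symmetry axis -/

lemma closure_setOf_inner_pos {E : Type*} [NormedAddCommGroup E] [InnerProductSpace ℝ E]
    [CompleteSpace E] {p : E} (hp : p ≠ 0) : closure {v : E | 0 < ⟪p, v⟫} = {v | 0 ≤ ⟪p, v⟫} := by
  have hsurj : Function.Surjective (innerSL ℝ p) :=
    LinearMap.surjective (f := (innerSL ℝ p).toLinearMap) fun h =>
      hp (inner_self_eq_zero.1 (DFunLike.congr_fun h p))
  simpa [closure_Ioi, preimage, innerSL_apply_apply] using
    (innerSL ℝ p).closure_preimage hsurj (Ioi 0)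

lemma continuousAt_normalize {E : Type*} [NormedAddCommGroup E] [NormedSpace ℝ E] {v : E}
    (hv : v ≠ 0) : ContinuousAt NormedSpace.normalize v :=
  (continuousAt_id.norm.inv₀ (norm_ne_zero_iff.2 hv)).smul continuousAt_id

variable {B : Set (EuclideanSpace ℝ (Fin N))} {u : EuclideanSpace ℝ (Fin N) → ℝ} {L : ℝ}
  {e p : EuclideanSpace ℝ (Fin N)}

namespace IsStrictlyDominant

lemma isDominant (hdom : IsStrictlyDominant B u e) : IsDominant B u e := fun x hx => (hdom x hx).le

lemma inner_nonneg_of_isMaxOn (hdom : IsStrictlyDominant B u e) (hB : IsRadialDomain B)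
    (he : ‖e‖ = 1) (hpB : p ∈ B) (hmax : IsMaxOn u (sphere 0 ‖p‖) p) : 0 ≤ ⟪p, e⟫ := by
  by_contra! hneg
  have hσp : reflHyp e p ∈ halfDom B e :=
    ⟨(hB.reflHyp_mem_iff he).2 hpB, by rw [inner_reflHyp_self he]; linarith⟩
  have hlt : u p < u (reflHyp e p) := by
    simpa only [reflDiff, reflHyp_reflHyp he, sub_pos] using hdom _ hσp
  exact hlt.not_ge (hmax (mem_sphere_zero_iff_norm.2 (norm_reflHyp he p)))

end IsStrictlyDominant

namespace IsRadialSolution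

lemma isStrictlyDominant_of_mem_closure (hu : IsRadialSolution B L u) (hpB : p ∈ B)
    (hmax : IsMaxOn u (sphere 0 ‖p‖) p) (he : ‖e‖ = 1) (hpe : 0 < ⟪p, e⟫)
    (hcl : e ∈ closure {e' | ‖e'‖ = 1 ∧ IsStrictlyDominant B u e'}) :
    IsStrictlyDominant B u e := by
  have hB := hu.isRadialDomain
  refine (hu.isStrictlyDominant_or_eq_zero he (hu.isDominant_of_mem_closure he
    (closure_mono (fun _ h => h.2.isDominant) hcl))).resolve_right fun hsymm => ?_
  have hu_eq : u p = u (reflHyp e p) := sub_eq_zero.1 (hsymm p ⟨hpB, hpe⟩)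
  have hmax' : IsMaxOn u (sphere 0 ‖reflHyp e p‖) (reflHyp e p) := by
    rw [norm_reflHyp he]
    exact fun x hx => (hmax hx).trans hu_eq.le
  have hneg : ⟪reflHyp e p, e⟫ < 0 := by rw [inner_reflHyp_self he]; linarith
  have hcont : Continuous fun e' : EuclideanSpace ℝ (Fin N) => ⟪reflHyp e p, e'⟫ :=
    continuous_const.inner continuous_id
  obtain ⟨e', ⟨he', hdom'⟩, hneg'⟩ := ((mem_closure_iff_frequently.1 hcl).and_eventually
    ((hcont.tendsto e).eventually (gt_mem_nhds hneg))).exists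
  exact hneg'.not_ge
    (hdom'.inner_nonneg_of_isMaxOn hB he' ((hB.reflHyp_mem_iff he).2 hpB) hmax')

lemma isStrictlyDominant_of_inner_pos (hu : IsRadialSolution B L u) (hpB : p ∈ B) (hp : p ≠ 0)
    (hmax : IsMaxOn u (sphere 0 ‖p‖) p) (he : ‖e‖ = 1) (hdom : IsStrictlyDominant B u e)
    {v : EuclideanSpace ℝ (Fin N)} (hpv : 0 < ⟪p, v⟫) :
    IsStrictlyDominant B u (NormedSpace.normalize v) := by
  let D : Set (EuclideanSpace ℝ (Fin N)) :=
    {v | v ≠ 0 ∧ IsStrictlyDominant B u (NormedSpace.normalize v)}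
  have hne {v : EuclideanSpace ℝ (Fin N)} (hv : 0 < ⟪p, v⟫) : v ≠ 0 := fun h => by simp [h] at hv
  have hD_open : IsOpen D := isOpen_iff_mem_nhds.2 fun v ⟨hv, hv_dom⟩ => by
    filter_upwards [isOpen_ne.mem_nhds hv, (continuousAt_normalize hv).eventually
      (hu.eventually_isStrictlyDominant (NormedSpace.norm_normalize_eq_one_iff.2 hv) hv_dom)]
      with w hw hw_dom using ⟨hw, hw_dom (NormedSpace.norm_normalize_eq_one_iff.2 hw)⟩
  have hD_closed : closure D ∩ {v | 0 < ⟪p, v⟫} ⊆ D := fun v ⟨hv, hpv⟩ => by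
    have hv₀ := hne hpv
    refine ⟨hv₀, hu.isStrictlyDominant_of_mem_closure hpB hmax
      (NormedSpace.norm_normalize_eq_one_iff.2 hv₀) ?_ ?_⟩
    · rw [inner_normalize_right]
      exact mul_pos (inv_pos.2 (norm_pos_iff.2 hv₀)) hpv
    · exact (continuousAt_normalize hv₀).continuousWithinAt.mem_closure hv
        fun w hw => ⟨NormedSpace.norm_normalize_eq_one_iff.2 hw.1, hw.2⟩
  have hD_nonempty : ({v | 0 < ⟪p, v⟫} ∩ D).Nonempty := by
    have he_cl : e ∈ closure {v | 0 < ⟪p, v⟫} := by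
      rw [closure_setOf_inner_pos hp]
      exact hdom.inner_nonneg_of_isMaxOn hu.isRadialDomain he hpB hmax
    rw [inter_comm]
    refine mem_closure_iff_nhds.1 he_cl _ (hD_open.mem_nhds ⟨norm_ne_zero_iff.1 (by simp [he]), ?_⟩)
    rwa [NormedSpace.normalize_eq_self_of_norm_eq_one he]
  have hhalf : Convex ℝ {v | 0 < ⟪p, v⟫} :=
    convex_halfSpace_gt (innerSL ℝ p).toLinearMap.isLinear 0
  exact (hhalf.isPreconnected.subset_of_closure_inter_subset hD_open hD_nonempty hD_closed hpv).2

lemma isDominant_of_inner_nonneg (hu : IsRadialSolution B L u) (hp : p ≠ 0)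
    (hdom : ∀ v, 0 < ⟪p, v⟫ → IsStrictlyDominant B u (NormedSpace.normalize v)) (he : ‖e‖ = 1)
    (hpe : 0 ≤ ⟪p, e⟫) : IsDominant B u e := by
  refine hu.isDominant_of_mem_closure he ?_
  have he_cl : e ∈ closure {v | 0 < ⟪p, v⟫} := by rwa [closure_setOf_inner_pos hp]
  have he₀ : e ≠ 0 := norm_ne_zero_iff.1 (by simp [he])
  simpa only [NormedSpace.normalize_eq_self_of_norm_eq_one he] using
    (continuousAt_normalize he₀).continuousWithinAt.mem_closure he_cl
      fun v hv => (hdom v hv).isDominant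

lemma foliatedSchwarzOn (hu : IsRadialSolution B L u)
    (hdom : ∀ e, ‖e‖ = 1 → 0 ≤ ⟪p, e⟫ → IsDominant B u e) :
    FoliatedSchwarzOn (closure B) u p := by
  intro x hx y hy hxy hle
  obtain rfl | hne := eq_or_ne x y
  · rfl
  have hv : x - y ≠ 0 := sub_ne_zero.2 hne
  by_cases hxB : x ∈ B
  · have hv_inv : 0 < ‖x - y‖⁻¹ := inv_pos.2 (norm_pos_iff.2 hv)
    have hσx : reflHyp (NormedSpace.normalize (x - y)) x = y := by
      rw [reflHyp_normalize, Submodule.reflection_sub hxy]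
    have hpv : 0 ≤ ⟪p, NormedSpace.normalize (x - y)⟫ := by
      rw [inner_normalize_right, inner_sub_right, real_inner_comm, real_inner_comm y p]
      exact mul_nonneg hv_inv.le (sub_nonneg.2 hle)
    have hx_half : x ∈ halfDom B (NormedSpace.normalize (x - y)) := by
      refine ⟨hxB, ?_⟩
      rw [inner_normalize_right]
      exact mul_pos hv_inv (inner_sub_right_pos hxy hne)
    have hw := hdom _ (NormedSpace.norm_normalize_eq_one_iff.2 hv) hpv x hx_half
    rwa [reflDiff, hσx, sub_nonneg] at hw
  · have hyB : y ∉ B := mt (hu.isRadialDomain.mem_iff_of_norm_eq hxy).2 hxB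
    exact (hu.eq_of_mem_frontier y ⟨hy, notMem_subset interior_subset hyB⟩ x
      ⟨hx, notMem_subset interior_subset hxB⟩ hxy.symm).le

lemma exists_isMaxOn_sphere (hu : IsRadialSolution B L u) (hN : 0 < N) :
    ∃ p ∈ B, p ≠ 0 ∧ IsMaxOn u (sphere 0 ‖p‖) p := by
  obtain ⟨ρ, hρ, hρB⟩ := hu.isRadialDomain.exists_sphere_subset
  have : Nonempty (Fin N) := Fin.pos_iff_nonempty.1 hN
  obtain ⟨p, hp, hmax⟩ := (isCompact_sphere (0 : EuclideanSpace ℝ (Fin N)) ρ).exists_isMaxOn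
    (NormedSpace.sphere_nonempty.2 hρ.le) (hu.continuousOn.mono (hρB.trans subset_closure))
  have hp_norm : ‖p‖ = ρ := mem_sphere_zero_iff_norm.1 hp
  exact ⟨p, hρB hp, norm_ne_zero_iff.1 (hp_norm ▸ hρ.ne'), hp_norm ▸ hmax⟩

end IsRadialSolution

end Axis

section MainTheorem

lemma contDiffOn_two_of_hasFDerivAt {E F : Type*} [NormedAddCommGroup E] [NormedSpace ℝ E]
    [NormedAddCommGroup F] [NormedSpace ℝ F] {s : Set E} (hs : IsOpen s) {u : E → F}
    {Du : E → E →L[ℝ] F} {D2u : E → E →L[ℝ] E →L[ℝ] F} (hDu : ∀ x ∈ s, HasFDerivAt u (Du x) x)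
    (hD2u : ∀ x ∈ s, HasFDerivAt Du (D2u x) x) (hcont : ContinuousOn D2u s) :
    ContDiffOn ℝ 2 u s := by
  have hDu_contDiff : ContDiffOn ℝ (0 + 1) Du s :=
    (contDiffOn_succ_iff_hasFDerivWithinAt_of_uniqueDiffOn hs.uniqueDiffOn).2
      ⟨by simp, D2u, contDiffOn_zero.2 hcont, fun x hx => (hD2u x hx).hasFDerivWithinAt⟩
  rw [← one_add_one_eq_two]
  exact (contDiffOn_succ_iff_hasFDerivWithinAt_of_uniqueDiffOn hs.uniqueDiffOn).2
    ⟨by simp, Du, by simpa using hDu_contDiff, fun x hx => (hDu x hx).hasFDerivWithinAt⟩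

lemma laplacian_eq_sum_of_hasFDerivAt {u : EuclideanSpace ℝ (Fin N) → ℝ}
    {Du : EuclideanSpace ℝ (Fin N) → EuclideanSpace ℝ (Fin N) →L[ℝ] ℝ}
    {D2u : EuclideanSpace ℝ (Fin N) →L[ℝ] EuclideanSpace ℝ (Fin N) →L[ℝ] ℝ}
    {x : EuclideanSpace ℝ (Fin N)} (hDu : ∀ᶠ y in 𝓝 x, HasFDerivAt u (Du y) y)
    (hD2u : HasFDerivAt Du D2u x) :
    Δ u x = ∑ i, D2u (EuclideanSpace.single i 1) (EuclideanSpace.single i 1) := by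
  have hfderiv : fderiv ℝ u =ᶠ[𝓝 x] Du := hDu.mono fun y hy => hy.fderiv
  simp [laplacian_eq_sum_fderiv_fderiv (EuclideanSpace.basisFun (Fin N) ℝ) u x,
    hfderiv.fderiv_eq, hD2u.fderiv]

variable {B : Set (EuclideanSpace ℝ (Fin N))} {u : EuclideanSpace ℝ (Fin N) → ℝ}

lemma exists_isRadialSolution (hB : IsRadialDomain B) {f : ℝ → ℝ → ℝ}
    (hf : ∀ K > 0, ∃ L > 0, ∀ x ∈ B, ∀ s ∈ Icc (-K) K, ∀ t ∈ Icc (-K) K,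
      |f ‖x‖ s - f ‖x‖ t| ≤ L * |s - t|)
    (hu_cont : ContinuousOn u (closure B)) (hu_contDiff : ContDiffOn ℝ 2 u B)
    (hPDE : ∀ x ∈ B, -Δ u x = f ‖x‖ (u x))
    (hbc : ∀ x ∈ frontier B, ∀ y ∈ frontier B, ‖x‖ = ‖y‖ → u x = u y) :
    ∃ L, IsRadialSolution B L u := by
  obtain ⟨K, hK⟩ := hB.isCompact_closure.exists_bound_of_continuousOn hu_cont
  obtain ⟨L, hL, hf_lip⟩ := hf (max K 1) (by positivity)
  have hu_mem (x) (hx : x ∈ B) : u x ∈ Icc (-max K 1) (max K 1) :=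
    abs_le.1 ((hK x (subset_closure hx)).trans (le_max_left K 1))
  refine ⟨L, hB, hL.le, hu_cont, hu_contDiff, fun x hx y hy hxy => ?_, hbc⟩
  calc |Δ u x - Δ u y| = |f ‖x‖ (u x) - f ‖x‖ (u y)| := by
        rw [← hPDE x hx, hxy, ← hPDE y hy, ← abs_neg]
        ring_nf
    _ ≤ L * |u x - u y| := hf_lip x hx _ (hu_mem x hx) _ (hu_mem y hy)

theorem foliated_schwarz_symmetry_elliptic_general (hB : IsRadialDomain B) {f : ℝ → ℝ → ℝ}
    (hf : ∀ K > 0, ∃ L > 0, ∀ x ∈ B, ∀ s ∈ Icc (-K) K, ∀ t ∈ Icc (-K) K,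
      |f ‖x‖ s - f ‖x‖ t| ≤ L * |s - t|)
    (hu_cont : ContinuousOn u (closure B)) (hu_contDiff : ContDiffOn ℝ 2 u B)
    (hPDE : ∀ x ∈ B, -Δ u x = f ‖x‖ (u x))
    (hbc : ∀ x ∈ frontier B, ∀ y ∈ frontier B, ‖x‖ = ‖y‖ → u x = u y)
    {e : EuclideanSpace ℝ (Fin N)} (he : ‖e‖ = 1) (hdom : ∀ x ∈ halfDom B e, u (reflHyp e x) ≤ u x)
    (hne : ∃ x ∈ halfDom B e, u (reflHyp e x) ≠ u x) :
    ∃ p : EuclideanSpace ℝ (Fin N), ‖p‖ = 1 ∧ FoliatedSchwarzOn (closure B) u p := by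
  obtain ⟨L, hu⟩ := exists_isRadialSolution hB hf hu_cont hu_contDiff hPDE hbc
  obtain ⟨x, hx, hux⟩ := hne
  have hstrict : IsStrictlyDominant B u e :=
    hu.isStrictlyDominant_of_pos he (fun y hy => sub_nonneg.2 (hdom y hy)) hx
      (sub_pos.2 ((hdom x hx).lt_of_ne hux))
  obtain ⟨p, hpB, hp, hmax⟩ := hu.exists_isMaxOn_sphere (pos_of_norm_eq_one he)
  refine ⟨NormedSpace.normalize p, NormedSpace.norm_normalize_eq_one_iff.2 hp,
    hu.foliatedSchwarzOn fun e' he' hpe' => ?_⟩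
  refine hu.isDominant_of_inner_nonneg hp
    (fun v hv => hu.isStrictlyDominant_of_inner_pos hpB hp hmax he hstrict hv) he' ?_
  rw [← NormedSpace.norm_smul_normalize p, real_inner_smul_left]
  positivity

end MainTheorem

/-- Corollary `maincoro-simple`(i) of the paper:
a classical solution `u ∈ C(B̄) ∩ C²(B)` of the elliptic problem
`−Δu = f(|x|,u)` in `B`, `u = 0` on `∂B`, satisfying the reflection hypothesis
(U1), is foliated Schwarz symmetric with respect to some unit vector `p`.

The `C²` regularity is encoded via the differential `Du` and the second
differential `D2u`, continuous on `B`, and `Δu = ∑ i, D²u(eᵢ, eᵢ)`. -/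
theorem foliated_schwarz_symmetry_elliptic
    (N : ℕ) (hN : 2 ≤ N)
    (B : Set (EuclideanSpace ℝ (Fin N))) (hB : IsRadialDomain B)
    (f : ℝ → ℝ → ℝ)
    (Iset : Set ℝ) (hI : Iset = closure ((fun x : EuclideanSpace ℝ (Fin N) => ‖x‖) '' B))
    -- f is continuous in r and locally Lipschitz in u uniformly in r
    (hf_cont : ∀ s : ℝ, ContinuousOn (fun r : ℝ => f r s) Iset)
    (hf_lip : ∀ K > (0:ℝ), ∃ L > (0:ℝ), ∀ r ∈ Iset,
      ∀ u₁ ∈ Icc (-K) K, ∀ u₂ ∈ Icc (-K) K, |f r u₁ - f r u₂| ≤ L * |u₁ - u₂|)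
    -- the solution and its derivatives
    (u : EuclideanSpace ℝ (Fin N) → ℝ)
    (Du : EuclideanSpace ℝ (Fin N) → (EuclideanSpace ℝ (Fin N) →L[ℝ] ℝ))
    (D2u : EuclideanSpace ℝ (Fin N) →
      (EuclideanSpace ℝ (Fin N) →L[ℝ] EuclideanSpace ℝ (Fin N) →L[ℝ] ℝ))
    -- u ∈ C(B̄) ∩ C²(B)
    (hu_cont : ContinuousOn u (closure B))
    (hDu : ∀ x ∈ B, HasFDerivAt u (Du x) x)
    (hD2u : ∀ x ∈ B, HasFDerivAt Du (D2u x) x)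
    (hreg : ContinuousOn D2u B)
    -- the equation −Δu = f(|x|,u) in B
    (hPDE : ∀ x ∈ B,
      -(∑ i, D2u x (EuclideanSpace.single i 1) (EuclideanSpace.single i 1)) = f ‖x‖ (u x))
    -- the boundary condition u = 0 on ∂B
    (hbc : ∀ x ∈ frontier B, u x = 0)
    -- (U1): reflection inequality
    (hU1 : ∃ e : EuclideanSpace ℝ (Fin N), ‖e‖ = 1 ∧
      (∀ x ∈ halfDom B e, u (reflHyp e x) ≤ u x) ∧
      (∃ x ∈ halfDom B e, u (reflHyp e x) ≠ u x)) :
    ∃ p : EuclideanSpace ℝ (Fin N), ‖p‖ = 1 ∧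
      FoliatedSchwarzOn (closure B) u p := by
  obtain ⟨e, he, hdom, hne⟩ := hU1
  have hDu_near (x) (hx : x ∈ B) : ∀ᶠ y in 𝓝 x, HasFDerivAt u (Du y) y :=
    Filter.Eventually.mono (hB.isOpen.mem_nhds hx) hDu
  refine foliated_schwarz_symmetry_elliptic_general hB (f := f) (fun K hK => ?_) hu_cont
    (contDiffOn_two_of_hasFDerivAt hB.isOpen hDu hD2u hreg) (fun x hx => ?_)
    (fun x hx y hy _ => (hbc x hx).trans (hbc y hy).symm) he hdom hne
  · obtain ⟨L, hL, hf⟩ := hf_lip K hK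
    exact ⟨L, hL, fun x hx => hf _ (hI ▸ subset_closure (mem_image_of_mem _ hx))⟩
  · rw [← hPDE x hx, laplacian_eq_sum_of_hasFDerivAt (hDu_near x hx) (hD2u x hx)]

end
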